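/- (Hajnal–Szemerédi) Every finite simple graph G on a vertex set V in which every vertex has degree at most Δ admits an equitable (Δ+1)-coloring: a function f : V → {1,…,Δ+1} such that f(u) ≠ f(v) for every edge {u,v} of G, and the sizes of any two color classes |f⁻¹(x)| and |f⁻¹(y)| differ by at most 1. -/

import Mathlib

/-!
The argument is that of Kierstead and Kostochka. If the number of colours divides the number of
vertices, delete all edges at a vertex `v`, colour what is left by induction on the edges, and move
`v` to a colour missing from its neighbourhood. This gives a nearly uniform colouring: one class
`a` lacks a vertex and one class `b` has a vertex too many. Draw an arc from a colour `x` to a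
colour `y` if some vertex of colour `x` has no neighbour of colour `y`. If `b` reaches `a`, moving
one vertex along each arc of a path repairs the colouring.

Otherwise let `A` be the set of colours that reach `a`; every vertex with a colour outside `A` sees
all of `A`. Choose a set `T ⊆ A` of colours that can each be removed without cutting off the rest
of `A` from `a`, and whose arcs within `A` lead only to `T` and to one further colour. If a vertex
`z` of a class in `T` is the only neighbour in its class of a vertex `y` outside `A`, then `y` can
replace `z`, the remaining vertices outside `A` being recoloured by induction on the number of
vertices. If moreover `z` can move to another class in `A`, this repairs the colouring. If no such
`z` can move within `A`, then counting edges between `T` and the complement of `A` yields such a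
`z` serving two nonadjacent vertices `y₁` and `y₂`: when `y₁` replaces `z` and `z` leaves `A`, the
vertex `y₂` can move to the old class of `z`, so that the set of colours reaching `a` grows.

Divisibility is arranged by adding a disjoint clique with at most `Δ` vertices; it meets each
colour class at most once, so removing it leaves an equitable colouring.
-/

namespace HajnalSzemeredi

open Finset Function Relation

section Digraph

variable {C : Type*} {H H' : C → C → Prop} {a u x y : C}

/-- The digraph `H` without its arcs into `u`. A path starting at `u` itself is still allowed, so
that `u` reaches the same vertices in `avoiding H u` as in `H`. -/
def avoiding (H : C → C → Prop) (u : C) : C → C → Prop := fun x y => H x y ∧ y ≠ u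

lemma reflTransGen_of_avoiding (h : ReflTransGen (avoiding H u) x y) : ReflTransGen H x y :=
  ReflTransGen.mono (fun _ _ hxy => hxy.1) _ _ h

lemma reflTransGen_avoiding_self (h : ReflTransGen H x a) : ReflTransGen (avoiding H x) x a := by
  induction h with
  | refl => exact .refl
  | @tail c d _ hcd ih =>
    by_cases hd : d = x
    · exact hd ▸ .refl
    · exact ih.tail ⟨hcd, hd⟩

lemma ne_of_reflTransGen_avoiding (h : ReflTransGen (avoiding H u) x y) (hx : x ≠ u) : y ≠ u := by
  rcases h.cases_tail with rfl | ⟨_, -, -, hy⟩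
  · exact hx
  · exact hy

lemma eq_of_reflTransGen_avoiding (h : ReflTransGen (avoiding H a) x a) : x = a := by
  by_contra hx
  exact ne_of_reflTransGen_avoiding h hx rfl

lemma reflTransGen_avoiding_or (u : C) (h : ReflTransGen H x a) :
    ReflTransGen (avoiding H u) x a ∨ ReflTransGen H u a := by
  induction h using ReflTransGen.head_induction_on with
  | refl => exact .inl .refl
  | @head c d hcd hda ih =>
    by_cases hd : d = u
    · exact .inr (hd ▸ hda)
    · exact ih.imp_left (.head ⟨hcd, hd⟩)

lemma reflTransGen_of_between (h : ReflTransGen H x a)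
    (hH : ∀ u v, ReflTransGen H x u → H u v → ReflTransGen H v a → H' u v) :
    ReflTransGen H' x a := by
  suffices ∀ y, ReflTransGen H y a → ReflTransGen H x y → ReflTransGen H' y a from this x h .refl
  intro y hy
  induction hy using ReflTransGen.head_induction_on with
  | refl => exact fun _ => .refl
  | head hcd hda ih => exact fun hxc => .head (hH _ _ hxc hcd hda) (ih (hxc.tail hcd))

variable [Fintype C]

open Classical in
/-- The finite set of vertices from which `a` can be reached along the arcs of `H`. -/
noncomputable def accessible (H : C → C → Prop) (a : C) : Finset C := {x | ReflTransGen H x a}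

lemma mem_accessible : x ∈ accessible H a ↔ ReflTransGen H x a := by simp [accessible]

lemma self_mem_accessible (H : C → C → Prop) (a : C) : a ∈ accessible H a :=
  mem_accessible.2 .refl

lemma mem_accessible_of_rel (hxy : H x y) (hy : y ∈ accessible H a) : x ∈ accessible H a :=
  mem_accessible.2 (.head hxy (mem_accessible.1 hy))

open Classical in
/-- The vertices that reach `a`, but only along paths through `u`. -/
noncomputable def dominated (H : C → C → Prop) (a u : C) : Finset C :=
  accessible H a \ accessible (avoiding H u) a

lemma mem_dominated :
    x ∈ dominated H a u ↔ ReflTransGen H x a ∧ ¬ ReflTransGen (avoiding H u) x a := by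
  simp [dominated, mem_accessible]

lemma dominated_ssubset_dominated (hx : x ∈ dominated H a u) :
    dominated H a x ⊂ dominated H a u := by
  obtain ⟨hxa, hxu⟩ := mem_dominated.1 hx
  refine (ssubset_iff_of_subset fun y hy => ?_).2 ⟨x, hx, fun hxx => ?_⟩
  · obtain ⟨hya, hyx⟩ := mem_dominated.1 hy
    refine mem_dominated.2 ⟨hya, fun hyu => ?_⟩
    refine (reflTransGen_avoiding_or x hyu).elim (fun h => hyx ?_) hxu
    exact ReflTransGen.mono (fun _ _ hcd => ⟨hcd.1.1, hcd.2⟩) _ _ h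
  · exact (mem_dominated.1 hxx).2 (reflTransGen_avoiding_self hxa)

-- The set `T` is a nonempty set of the form `dominated H a u` with the fewest elements.
lemma exists_terminal_set (hx : x ∈ accessible H a) (hxa : x ≠ a) :
    ∃ u, ∃ T ⊆ accessible H a, T.Nonempty ∧ a ∉ T ∧
      (∀ w ∈ T, accessible H a ⊆ accessible (avoiding H w) a) ∧
      ∀ w ∈ T, ∀ y ∈ accessible H a, y ≠ u → y ∉ T → ¬ H w y := by
  classical
  have hxT : x ∈ dominated H a a :=
    mem_dominated.2 ⟨mem_accessible.1 hx, fun h => hxa (eq_of_reflTransGen_avoiding h)⟩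
  obtain ⟨u, hu, hmin⟩ := exists_min_image {u | (dominated H a u).Nonempty}
    (fun u => #(dominated H a u)) ⟨a, by simpa using ⟨x, hxT⟩⟩
  obtain ⟨v, hv⟩ : (dominated H a u).Nonempty := by simpa using hu
  refine ⟨u, dominated H a u, sdiff_subset, ⟨v, hv⟩,
    fun h => (mem_dominated.1 h).2 .refl, fun w hw => ?_, fun w hw y hy hyu hyT hwy => ?_⟩
  · have hempty : ¬ (dominated H a w).Nonempty := fun hne =>
      (card_lt_card (dominated_ssubset_dominated hw)).not_ge (hmin w (by simpa using hne))
    exact sdiff_eq_empty_iff_subset.1 (not_nonempty_iff_eq_empty.1 hempty)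
  · have hy' : ReflTransGen (avoiding H u) y a := by
      by_contra h
      exact hyT (mem_dominated.2 ⟨mem_accessible.1 hy, h⟩)
    exact (mem_dominated.1 hw).2 (.head ⟨hwy, hyu⟩ hy')

end Digraph

section Coloring

variable {V C : Type*}

/-- `f` is a proper colouring of `G`. -/
def IsProper (G : SimpleGraph V) (f : V → C) : Prop := ∀ ⦃u v⦄, G.Adj u v → f u ≠ f v

/-- The vertex `v` has a neighbour of colour `c`. -/
def Sees (G : SimpleGraph V) (f : V → C) (v : V) (c : C) : Prop := ∃ w, G.Adj v w ∧ f w = c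

/-- The digraph on the colours with an arc from `x` to `y` if some vertex of colour `x` can be
recoloured with `y`. -/
def Shift (G : SimpleGraph V) (f : V → C) (x y : C) : Prop := ∃ v, f v = x ∧ ¬ Sees G f v y

/-- A solo pair: `z` is the only neighbour of `y` in the colour class of `z`. -/
def Solo (G : SimpleGraph V) (f : V → C) (z y : V) : Prop :=
  G.Adj y z ∧ ∀ w, G.Adj y w → f w = f z → w = z

variable {G : SimpleGraph V} {f f' : V → C} {a b x y : C} {v : V}

lemma sees_of_notMem_accessible [Fintype C] {c : C} (hv : f v ∉ accessible (Shift G f) a)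
    (hc : c ∈ accessible (Shift G f) a) : Sees G f v c := by
  by_contra h
  exact hv (mem_accessible_of_rel ⟨v, rfl, h⟩ hc)

lemma Shift.of_fibers (h : Shift G f x y) (hx : ∀ v, f v = x → f' v = x)
    (hy : ∀ v, f' v = y → f v = y) : Shift G f' x y := by
  obtain ⟨v, hv, hvy⟩ := h
  exact ⟨v, hx v hv, fun ⟨w, hvw, hw⟩ => hvy ⟨w, hvw, hy w hw⟩⟩

lemma isProper_update [DecidableEq V]
    (hf : ∀ u w, u ≠ v → w ≠ v → G.Adj u w → f u ≠ f w) (hv : ¬ Sees G f v x) :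
    IsProper G (update f v x) := by
  have hx : ∀ w, G.Adj v w → f w ≠ x := fun w hw hwx => hv ⟨w, hw, hwx⟩
  intro u w huw
  rcases eq_or_ne u v with rfl | hu
  · rw [update_self, update_of_ne huw.ne']
    exact (hx w huw).symm
  rcases eq_or_ne w v with rfl | hw
  · rw [update_self, update_of_ne hu]
    exact hx u huw.symm
  · rw [update_of_ne hu, update_of_ne hw]
    exact hf u w hu hw huw

variable [Fintype V] [DecidableEq C] {s : ℕ}

/-- All fibres of `f` have `s` elements, except that the fibre over `a` lacks one element and the
fibre over `b` has one extra element; for `a = b` these two exceptions cancel. -/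
def HasNearlyUniformFibers (s : ℕ) (f : V → C) (a b : C) : Prop :=
  ∀ c, #{v | f v = c} + (if c = a then 1 else 0) = s + if c = b then 1 else 0

/-- A proper colouring all of whose classes have `s` vertices. -/
structure IsUniformColoring (G : SimpleGraph V) (s : ℕ) (f : V → C) : Prop where
  isProper : IsProper G f
  card_fiber : ∀ c, #{v | f v = c} = s

/-- A proper colouring all of whose classes have `s` vertices, except for one missing from the
class `a` and one extra in the class `b`. -/
structure IsNearlyUniformColoring (G : SimpleGraph V) (s : ℕ) (f : V → C) (a b : C) : Prop where
  isProper : IsProper G f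
  fibers : HasNearlyUniformFibers s f a b

lemma hasNearlyUniformFibers_self_iff :
    HasNearlyUniformFibers s f a a ↔ ∀ c, #{v | f v = c} = s := by
  simp [HasNearlyUniformFibers]

lemma HasNearlyUniformFibers.card_fiber {c : C} (h : HasNearlyUniformFibers s f a b) (ha : c ≠ a)
    (hb : c ≠ b) : #{v | f v = c} = s := by
  simpa [ha, hb] using h c

lemma card_fiber_eq_add_card_erase [DecidableEq V] (f : V → C) (v : V) (c : C) :
    #{w | f w = c} = #{w ∈ univ.erase v | f w = c} + if c = f v then 1 else 0 := by
  simp only [card_filter, ← sum_erase_add univ _ (mem_univ v), eq_comm]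

lemma card_fiber_update [DecidableEq V] (f : V → C) (v : V) (x c : C) :
    #{w | update f v x w = c} + (if c = f v then 1 else 0) =
      #{w | f w = c} + if c = x then 1 else 0 := by
  have herase : #{w ∈ univ.erase v | update f v x w = c} = #{w ∈ univ.erase v | f w = c} :=
    congrArg card (filter_congr fun w hw => by rw [update_of_ne (ne_of_mem_erase hw)])
  rw [card_fiber_eq_add_card_erase f v, card_fiber_eq_add_card_erase (update f v x) v, herase,
    update_self]
  ring

lemma HasNearlyUniformFibers.update [DecidableEq V] (h : HasNearlyUniformFibers s f a (f v))
    (x : C) : HasNearlyUniformFibers s (update f v x) a x := by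
  intro c
  have hcard := card_fiber_update f v x c
  have hc := h c
  omega

lemma IsNearlyUniformColoring.update [DecidableEq V]
    (h : IsNearlyUniformColoring G s f a (f v)) (hx : ¬ Sees G f v x) :
    IsNearlyUniformColoring G s (update f v x) a x :=
  ⟨isProper_update (fun _ _ _ _ huw => h.isProper huw) hx, h.fibers.update x⟩

-- Shift one vertex along the first arc of a simple path from `b` to `a`; the remaining arcs
-- survive, and `D` shrinks because a simple path does not return to a colour it has left.
lemma IsNearlyUniformColoring.exists_isUniformColoring_of_reflTransGen (D : Finset C)
    (h : IsNearlyUniformColoring G s f a b)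
    (hba : ReflTransGen (fun x y => Shift G f x y ∧ y ∈ D) b a) :
    ∃ g : V → C, IsUniformColoring G s g := by
  classical
  induction D using Finset.strongInduction generalizing f b with
  | H D ih
  rcases (reflTransGen_avoiding_self hba).cases_head with rfl | ⟨y, hby, hya⟩
  · exact ⟨f, h.isProper, hasNearlyUniformFibers_self_iff.1 h.fibers⟩
  obtain ⟨⟨⟨v, rfl, hv⟩, hyD⟩, hyb⟩ := hby
  refine ih (D.erase y) (erase_ssubset hyD) (h.update hv) ?_
  refine reflTransGen_of_between (reflTransGen_avoiding_self hya) fun u w hyu huw _ => ?_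
  obtain ⟨⟨⟨hshift, hwD⟩, -⟩, hwy⟩ := huw
  have huv : u ≠ f v := ne_of_reflTransGen_avoiding (reflTransGen_of_avoiding hyu) hyb
  refine ⟨hshift.of_fibers (fun t ht => ?_) (fun t ht => ?_), mem_erase.2 ⟨hwy, hwD⟩⟩
  · rwa [update_of_ne (by rintro rfl; exact huv ht.symm)]
  · rwa [update_of_ne (by rintro rfl; exact hwy (ht.symm.trans (update_self ..)))] at ht

variable [Fintype C]

lemma IsNearlyUniformColoring.exists_isUniformColoring_of_mem_accessible
    (h : IsNearlyUniformColoring G s f a b) (hb : b ∈ accessible (Shift G f) a) :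
    ∃ g : V → C, IsUniformColoring G s g :=
  h.exists_isUniformColoring_of_reflTransGen univ (by simpa using mem_accessible.1 hb)

end Coloring

section Counting

/-- The number of neighbours of `v` whose colour lies in `K`. -/
def colorDegree {V C : Type*} [Fintype V] [DecidableEq C] (G : SimpleGraph V) [DecidableRel G.Adj]
    (f : V → C) (v : V) (K : Finset C) : ℕ := #{w ∈ G.neighborFinset v | f w ∈ K}

open Classical in
/-- The weight of `z` in the count of the neighbours of vertices with colours outside `A`:
solo vertices count twice. -/
noncomputable def soloWeight {V C : Type*} (G : SimpleGraph V) (f : V → C) (A : Finset C) (z : V) :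
    ℕ := if ∃ y, f y ∉ A ∧ Solo G f z y then 2 else 1

lemma one_le_soloWeight {V C : Type*} (G : SimpleGraph V) (f : V → C) (A : Finset C) (z : V) :
    1 ≤ soloWeight G f A z := by
  unfold soloWeight
  split_ifs <;> omega

lemma sum_sum_one_div_card_le {α β : Type*} (s : Finset α) (t : Finset β) (r : α → β → Prop)
    [∀ a, DecidablePred (r a)] :
    ∑ a ∈ s, ∑ b ∈ t with r a b, (1 : ℚ) / #{a ∈ s | r a b} ≤ #t := by
  calc ∑ a ∈ s, ∑ b ∈ t with r a b, (1 : ℚ) / #{a ∈ s | r a b}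
      = ∑ b ∈ t, ∑ a ∈ s with r a b, (1 : ℚ) / #{a ∈ s | r a b} :=
        sum_sum_bipartiteAbove_eq_sum_sum_bipartiteBelow r _
    _ ≤ ∑ _ ∈ t, (1 : ℚ) := by
        refine sum_le_sum fun _ _ => ?_
        rw [sum_const, nsmul_eq_mul, mul_one_div]
        exact div_self_le_one _
    _ = #t := by simp

variable {V C : Type*} [Fintype V] [DecidableEq C] {G : SimpleGraph V} {s : ℕ} {f : V → C}
  {a b c : C} {A K T : Finset C} {v y z : V}

lemma HasNearlyUniformFibers.card_preimage (h : HasNearlyUniformFibers s f a b) (K : Finset C) :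
    #{v | f v ∈ K} + (if a ∈ K then 1 else 0) = #K * s + if b ∈ K then 1 else 0 := by
  have hfiber : #{v | f v ∈ K} = ∑ c ∈ K, #{v | f v = c} := by
    rw [card_eq_sum_card_fiberwise (f := f) (t := K) fun v hv => by simpa using hv]
    refine sum_congr rfl fun c hc => ?_
    rw [filter_filter]
    exact congrArg card (filter_congr fun v _ => by grind)
  have hsum := sum_congr (rfl : K = K) fun c _ => h c
  rwa [sum_add_distrib, sum_add_distrib, sum_ite_eq', sum_ite_eq', ← hfiber, sum_const,
    smul_eq_mul] at hsum

variable [DecidableRel G.Adj]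

lemma colorDegree_sdiff_add (hKA : K ⊆ A) :
    colorDegree G f v (A \ K) + colorDegree G f v K = colorDegree G f v A := by
  unfold colorDegree
  rw [← card_filter_add_card_filter_not (s := {w ∈ G.neighborFinset v | f w ∈ A})
    (fun w => f w ∈ K), filter_filter, filter_filter, add_comm]
  congr 2 <;> grind

lemma card_le_colorDegree (hK : ∀ c ∈ K, Sees G f v c) : #K ≤ colorDegree G f v K := by
  refine (card_le_card fun c hc => ?_).trans
    (card_image_le (s := {w ∈ G.neighborFinset v | f w ∈ K}) (f := f))
  obtain ⟨w, hvw, rfl⟩ := hK c hc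
  exact mem_image_of_mem f (by simp [hvw, hc])

lemma sum_filter_sum_neighborFinset (K : Finset C) (c : C) (μ : V → ℕ) :
    ∑ y with f y ∈ K, ∑ z ∈ G.neighborFinset y with f z = c, μ z =
      ∑ z with f z = c, μ z * colorDegree G f z K := by
  rw [sum_comm' (t' := {z | f z = c}) (s' := fun z => {y ∈ G.neighborFinset z | f y ∈ K})]
  · simp [colorDegree, mul_comm]
  · intro y z
    simp only [mem_filter, mem_univ, true_and, SimpleGraph.mem_neighborFinset, G.adj_comm y z]
    tauto

lemma two_le_card_add_card_solo [DecidablePred fun z => Solo G f z y] (hc : Sees G f y c) :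
    2 ≤ #{w ∈ G.neighborFinset y | f w = c} + #{z | Solo G f z y ∧ f z = c} := by
  obtain ⟨z, hyz, hz⟩ := hc
  have hzmem : z ∈ ({w ∈ G.neighborFinset y | f w = c} : Finset V) := by simp [hyz, hz]
  by_cases hsolo : Solo G f z y
  · have h₁ := card_pos.2 ⟨z, hzmem⟩
    have h₂ : 0 < #{z | Solo G f z y ∧ f z = c} := card_pos.2 ⟨z, by simp [hsolo, hz]⟩
    omega
  · obtain ⟨w, hyw, hwz, hne⟩ : ∃ w, G.Adj y w ∧ f w = f z ∧ w ≠ z := by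
      by_contra! h
      exact hsolo ⟨hyz, h⟩
    have : 1 < #{w ∈ G.neighborFinset y | f w = c} :=
      one_lt_card.2 ⟨w, by simp [hyw, hwz, hz], z, hzmem, hne⟩
    omega

lemma two_mul_card_le_colorDegree_add_card_solo [DecidablePred fun z => Solo G f z y]
    (hK : ∀ c ∈ K, Sees G f y c) :
    2 * #K ≤ colorDegree G f y K + #{z | f z ∈ K ∧ Solo G f z y} := by
  have hN := card_eq_sum_card_fiberwise (f := f) (s := {w ∈ G.neighborFinset y | f w ∈ K}) (t := K)
    fun w hw => (mem_filter.1 hw).2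
  have hS := card_eq_sum_card_fiberwise (f := f) (s := {z | f z ∈ K ∧ Solo G f z y}) (t := K)
    fun w hw => (mem_filter.1 hw).2.1
  rw [colorDegree, hN, hS, ← sum_add_distrib, mul_comm, ← smul_eq_mul]
  refine card_nsmul_le_sum _ _ _ fun c hc => ?_
  have h := two_le_card_add_card_solo (hK c hc)
  have hN : {w ∈ {w ∈ G.neighborFinset y | f w ∈ K} | f w = c} =
      {w ∈ G.neighborFinset y | f w = c} := by grind
  have hS : ({z ∈ ({z | f z ∈ K ∧ Solo G f z y} : Finset V) | f z = c} : Finset V) =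
      ({z | Solo G f z y ∧ f z = c} : Finset V) := by grind
  rwa [hN, hS]

lemma two_le_sum_soloWeight (hy : f y ∉ A) (hc : Sees G f y c) :
    2 ≤ ∑ z ∈ G.neighborFinset y with f z = c, soloWeight G f A z := by
  classical
  calc 2 ≤ #{w ∈ G.neighborFinset y | f w = c} + #{z | Solo G f z y ∧ f z = c} :=
        two_le_card_add_card_solo hc
    _ = ∑ z ∈ G.neighborFinset y with f z = c, (1 + if Solo G f z y then 1 else 0) := by
        rw [sum_add_distrib, ← card_eq_sum_ones, ← card_filter, filter_filter]
        congr 2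
        ext z
        simp only [mem_filter, mem_univ, true_and, SimpleGraph.mem_neighborFinset]
        exact ⟨fun h => ⟨h.1.1, h.2, h.1⟩, fun h => ⟨h.2.2, h.2.1⟩⟩
    _ ≤ ∑ z ∈ G.neighborFinset y with f z = c, soloWeight G f A z := by
        gcongr with z
        split_ifs with hz
        · exact (if_pos ⟨y, hy, hz⟩ : soloWeight G f A z = 2).ge
        · exact one_le_soloWeight G f A z

lemma card_solo_le_colorDegree_add_one [DecidablePred fun y => Solo G f z y]
    (hclique : ∀ y', f y' ∈ K → Solo G f z y' → y ≠ y' → G.Adj y y') :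
    #{y ∈ ({y | f y ∈ K} : Finset V) | Solo G f z y} ≤ colorDegree G f y K + 1 := by
  classical
  refine (card_le_card fun w hw => ?_).trans
    (card_insert_le y {w ∈ G.neighborFinset y | f w ∈ K})
  obtain ⟨hwK, hw⟩ : f w ∈ K ∧ Solo G f z w := by simpa using hw
  rcases eq_or_ne w y with rfl | hwy
  · exact mem_insert_self _ _
  · exact mem_insert_of_mem (by simp [hclique w hwK hw hwy.symm, hwK])

variable [Fintype C]

lemma colorDegree_add_colorDegree_compl (K : Finset C) :
    colorDegree G f v K + colorDegree G f v Kᶜ = G.degree v := by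
  rw [compl_eq_univ_sdiff, add_comm, colorDegree_sdiff_add (subset_univ K)]
  simp [colorDegree]

lemma card_add_colorDegree_compl_lt (hdeg : G.degree v < Fintype.card C) (hKA : K ⊆ A)
    (hK : ∀ c ∈ K, Sees G f v c) : #K + colorDegree G f v Aᶜ < Fintype.card C := by
  have hK := card_le_colorDegree hK
  have hA := colorDegree_sdiff_add (G := G) (f := f) (v := v) hKA
  have htotal := colorDegree_add_colorDegree_compl (G := G) (f := f) (v := v) A
  omega

lemma card_add_colorDegree_compl_lt_add_card_solo [DecidablePred fun z => Solo G f z y]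
    (hdeg : G.degree y < Fintype.card C) (hTA : T ⊆ A) (hA : ∀ c ∈ A, Sees G f y c) :
    #T + colorDegree G f y Aᶜ < #Aᶜ + #{z | f z ∈ T ∧ Solo G f z y} := by
  have hT := two_mul_card_le_colorDegree_add_card_solo fun c hc => hA c (hTA hc)
  have hAT := card_le_colorDegree fun c hc => hA c ((mem_sdiff (s := A) (t := T)).1 hc).1
  have hsplit := colorDegree_sdiff_add (G := G) (f := f) (v := y) hTA
  have htotal := colorDegree_add_colorDegree_compl (G := G) (f := f) (v := y) A
  have hcard := card_sdiff_add_card_eq_card hTA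
  have hcompl := card_add_card_compl A
  omega

lemma soloWeight_mul_colorDegree_compl_le (hdeg : G.degree z < Fintype.card C) (hTA : T ⊆ A)
    {u : C} (hz : f z ∈ T) (hle : #T ≤ #Aᶜ)
    (hout : ∀ c ∈ A, c ≠ u → c ∉ T → Sees G f z c)
    (hsolo : ∀ y, f y ∉ A → Solo G f z y → ∀ c ∈ A, c ≠ f z → Sees G f z c) :
    soloWeight G f A z * colorDegree G f z Aᶜ ≤ 2 * #Aᶜ := by
  have hcompl := card_add_card_compl A
  by_cases hs : ∃ y, f y ∉ A ∧ Solo G f z y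
  · obtain ⟨y, hyA, hy⟩ := id hs
    have hlt := card_add_colorDegree_compl_lt hdeg (erase_subset (f z) A) fun c hc =>
      hsolo y hyA hy c (mem_of_mem_erase hc) (ne_of_mem_erase hc)
    have hcard := card_erase_add_one (hTA hz)
    rw [soloWeight, if_pos hs]
    omega
  · have hlt := card_add_colorDegree_compl_lt hdeg (sdiff_subset (s := A) (t := insert u T))
      fun c hc => by
        simp only [mem_sdiff, mem_insert, not_or] at hc
        exact hout c hc.1 hc.2.1 hc.2.2
    have hcard := le_card_sdiff (insert u T) A
    have hinsert := card_insert_le u T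
    rw [soloWeight, if_neg hs]
    omega

lemma card_compl_lt_card_of_sees (hdeg : ∀ v, G.degree v < Fintype.card C) (hTA : T ⊆ A)
    {u W : C} (hW : W ∈ T) (hB : ∀ y, f y ∉ A → Sees G f y W)
    (hBcard : #Aᶜ * s < #{v | f v ∈ Aᶜ}) (hWcard : #{v | f v = W} = s)
    (hout : ∀ z, f z = W → ∀ c ∈ A, c ≠ u → c ∉ T → Sees G f z c)
    (hsolo : ∀ z y, f z = W → f y ∉ A → Solo G f z y → ∀ c ∈ A, c ≠ W → Sees G f z c) :
    #Aᶜ < #T := by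
  by_contra! hle
  have : #{v | f v ∈ Aᶜ} * 2 ≤ s * (2 * #Aᶜ) :=
    calc #{v | f v ∈ Aᶜ} * 2
        ≤ ∑ y with f y ∈ Aᶜ, ∑ z ∈ G.neighborFinset y with f z = W, soloWeight G f A z := by
          rw [← smul_eq_mul]
          refine card_nsmul_le_sum _ _ _ fun y hy => ?_
          have hyA : f y ∉ A := by simpa using hy
          exact two_le_sum_soloWeight hyA (hB y hyA)
      _ = ∑ z with f z = W, soloWeight G f A z * colorDegree G f z Aᶜ :=
          sum_filter_sum_neighborFinset _ _ _
      _ ≤ s * (2 * #Aᶜ) := by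
          rw [← hWcard, ← smul_eq_mul]
          refine sum_le_card_nsmul _ _ _ fun z hz => ?_
          obtain rfl : f z = W := by simpa using hz
          exact soloWeight_mul_colorDegree_compl_le (hdeg z) hTA hW hle (hout z rfl)
            fun y => hsolo z y rfl
  nlinarith

lemma div_card_compl_le_sum_solo [DecidableRel fun y z => Solo G f z y]
    (hdeg : G.degree y < Fintype.card C) (hTA : T ⊆ A) (hle : #Aᶜ ≤ #T) (hy : f y ∉ A)
    (hA : ∀ c ∈ A, Sees G f y c)
    (hclique : ∀ z, f z ∈ T → Solo G f z y → ∀ y', f y' ∈ Aᶜ → Solo G f z y' →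
      y ≠ y' → G.Adj y y') :
    (#T : ℚ) / #Aᶜ ≤ ∑ z ∈ ({z | f z ∈ T} : Finset V) with Solo G f z y,
      (1 : ℚ) / #{y ∈ ({y | f y ∈ Aᶜ} : Finset V) | Solo G f z y} := by
  have hsolo := card_add_colorDegree_compl_lt_add_card_solo hdeg hTA hA
  have hlt := card_add_colorDegree_compl_lt hdeg Subset.rfl hA
  have hcompl := card_add_card_compl A
  rw [← filter_filter] at hsolo
  set d := colorDegree G f y Aᶜ
  set S : Finset V := {z ∈ ({z | f z ∈ T} : Finset V) | Solo G f z y}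
  calc (#T : ℚ) / #Aᶜ ≤ #S * (1 / (d + 1 : ℕ)) := by
        have hd : d + 1 ≤ #Aᶜ := by omega
        rw [mul_one_div, div_le_div_iff₀ (by norm_cast; omega) (by positivity)]
        norm_cast
        nlinarith [Nat.mul_le_mul_left (#T - #Aᶜ) hd, Nat.sub_add_cancel hle]
    _ ≤ _ := by
        rw [← nsmul_eq_mul]
        refine card_nsmul_le_sum _ _ _ fun z hz => ?_
        obtain ⟨hzT, hzy⟩ : f z ∈ T ∧ Solo G f z y := by simpa [S] using hz
        have hpos : 0 < #{y ∈ ({y | f y ∈ Aᶜ} : Finset V) | Solo G f z y} :=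
          card_pos.2 ⟨y, by simp [hy, hzy]⟩
        gcongr
        exact card_solo_le_colorDegree_add_one (hclique z hzT hzy)

lemma exists_solo_pair_not_adj (hdeg : ∀ v, G.degree v < Fintype.card C) (hTA : T ⊆ A)
    (hT : #Aᶜ < #T) (hB : ∀ y, f y ∉ A → ∀ c ∈ A, Sees G f y c)
    (hBcard : #Aᶜ * s < #{v | f v ∈ Aᶜ}) (hTcard : #{v | f v ∈ T} = #T * s) :
    ∃ z y₁ y₂, f z ∈ T ∧ f y₁ ∉ A ∧ f y₂ ∉ A ∧ Solo G f z y₁ ∧ Solo G f z y₂ ∧ y₁ ≠ y₂ ∧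
      ¬ G.Adj y₁ y₂ := by
  classical
  by_contra! hclique
  have hsum : #{v | f v ∈ Aᶜ} * ((#T : ℚ) / #Aᶜ) ≤ #T * s :=
    calc #{v | f v ∈ Aᶜ} * ((#T : ℚ) / #Aᶜ)
        ≤ ∑ y with f y ∈ Aᶜ, ∑ z ∈ ({z | f z ∈ T} : Finset V) with Solo G f z y,
            (1 : ℚ) / #{y ∈ ({y | f y ∈ Aᶜ} : Finset V) | Solo G f z y} := by
          rw [← nsmul_eq_mul]
          refine card_nsmul_le_sum _ _ _ fun y hy => ?_
          have hyA : f y ∉ A := by simpa using hy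
          exact div_card_compl_le_sum_solo (hdeg y) hTA hT.le hyA (hB y hyA)
            fun z hz hzy y' hy' => hclique z y y' hz hyA (mem_compl.1 hy') hzy
      _ ≤ #{z | f z ∈ T} := sum_sum_one_div_card_le _ _ _
      _ = #T * s := by rw [hTcard, Nat.cast_mul]
  obtain ⟨y, hy⟩ := card_pos.1 (Nat.zero_lt_of_lt hBcard)
  have hq : 0 < #Aᶜ := card_pos.2 ⟨f y, by simpa using hy⟩
  rw [← mul_div_assoc, div_le_iff₀ (by exact_mod_cast hq)] at hsum
  norm_cast at hsum
  nlinarith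

lemma IsNearlyUniformColoring.exists_mem_accessible_ne (h : IsNearlyUniformColoring G s f a b)
    (hdeg : ∀ v, G.degree v < Fintype.card C) (hb : b ∉ accessible (Shift G f) a) :
    ∃ x ∈ accessible (Shift G f) a, x ≠ a := by
  by_contra! hall
  have haA := self_mem_accessible (Shift G f) a
  have hA : accessible (Shift G f) a = {a} := eq_singleton_iff_unique_mem.2 ⟨haA, hall⟩
  have hba : b ≠ a := fun hba => hb (hba ▸ haA)
  have hclass : #{v | f v = a} + 1 = s := by simpa [hba.symm] using h.fibers a
  have hB : #{v | f v ∈ ({a}ᶜ : Finset C)} = #({a}ᶜ : Finset C) * s + 1 := by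
    simpa [hba] using h.fibers.card_preimage {a}ᶜ
  have hcompl : #({a}ᶜ : Finset C) = Fintype.card C - 1 := by rw [card_compl, card_singleton]
  have hle : #{v | f v ∈ ({a}ᶜ : Finset C)} ≤ #{v | f v = a} * #({a}ᶜ : Finset C) :=
    calc #{v | f v ∈ ({a}ᶜ : Finset C)}
        ≤ ∑ y with f y ∈ ({a}ᶜ : Finset C), ∑ z ∈ G.neighborFinset y with f z = a, 1 := by
          rw [card_eq_sum_ones]
          refine sum_le_sum fun y hy => ?_
          obtain ⟨z, hyz, hz⟩ := sees_of_notMem_accessible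
            (by rw [hA]; simpa using hy : f y ∉ accessible (Shift G f) a) haA
          rw [← card_eq_sum_ones]
          exact card_pos.2 ⟨z, by simp [hyz, hz]⟩
      _ = ∑ z with f z = a, 1 * colorDegree G f z {a}ᶜ := sum_filter_sum_neighborFinset _ _ _
      _ ≤ #{v | f v = a} * #({a}ᶜ : Finset C) := by
          rw [← smul_eq_mul]
          refine sum_le_card_nsmul _ _ _ fun z _ => ?_
          have hz := colorDegree_add_colorDegree_compl (G := G) (f := f) (v := z) {a}
          have hdegz := hdeg z
          omega
  nlinarith

end Counting

section Transfer

/-- The recolouring `g` moves `y` into the class `W ∈ A` and recolours the other vertices whose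
colour is not in `A` among themselves, so that all the classes outside `A` get `s` vertices. It is
proper except possibly at `y`. -/
structure IsTransfer {V C : Type*} [Fintype V] [DecidableEq C] (G : SimpleGraph V) (s : ℕ)
    (f g : V → C) (A : Finset C) (a : C) (y : V) (W : C) : Prop where
  apply_self : g y = W
  apply_eq : ∀ v, f v ∈ A → g v = f v
  apply_notMem : ∀ v, v ≠ y → f v ∉ A → g v ∉ A
  ne_of_adj : ∀ u v, u ≠ y → v ≠ y → G.Adj u v → g u ≠ g v
  fibers : HasNearlyUniformFibers s g a W

/-- The existence of uniform colourings with classes of size `s` for graphs with fewer than `n`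
vertices: the induction hypothesis of the main argument. -/
def HajnalSzemerediBelow.{u, v} (s n : ℕ) : Prop :=
  ∀ (V : Type u) (C : Type v) [Fintype V] [Fintype C] [DecidableEq C] (G : SimpleGraph V)
    [DecidableRel G.Adj], Fintype.card V < n → Fintype.card V = Fintype.card C * s →
    (∀ v, G.degree v < Fintype.card C) → ∃ f : V → C, IsUniformColoring G s f

universe u v

variable {V : Type u} {C : Type v} {G : SimpleGraph V} {s : ℕ} {f : V → C} {A : Finset C}
  {a b : C} {y : V}

open Classical in
/-- The colouring that agrees with `k` where `k` is defined and with `f` elsewhere. -/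
noncomputable def recolor (f : V → C) (k : {v // f v ∉ A ∧ v ≠ y} → {c // c ∉ A}) (v : V) : C :=
  if hv : f v ∉ A ∧ v ≠ y then k ⟨v, hv⟩ else f v

variable {k : {v // f v ∉ A ∧ v ≠ y} → {c // c ∉ A}}

lemma recolor_of_notMem {v : V} (hv : f v ∉ A) (hvy : v ≠ y) :
    recolor f k v = k ⟨v, hv, hvy⟩ := dif_pos ⟨hv, hvy⟩

lemma recolor_of_mem {v : V} (hv : f v ∈ A) : recolor f k v = f v := dif_neg fun h => h.1 hv

lemma recolor_self : recolor f k y = f y := dif_neg fun h => h.2 rfl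

lemma recolor_mem_iff {v : V} : recolor f k v ∈ A ↔ f v ∈ A := by
  by_cases hv : f v ∈ A
  · rw [recolor_of_mem hv]
  rcases eq_or_ne v y with rfl | hvy
  · rw [recolor_self]
  · simpa [recolor_of_notMem hv hvy, hv] using (k ⟨v, hv, hvy⟩).2

lemma recolor_ne_of_adj (hf : IsProper G f)
    (hk : IsProper (G.comap (Subtype.val : {v // f v ∉ A ∧ v ≠ y} → V)) k) {u v : V} (hu : u ≠ y)
    (hv : v ≠ y) (huv : G.Adj u v) : recolor f k u ≠ recolor f k v := by
  intro heq
  have hmem : f u ∈ A ↔ f v ∈ A := by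
    rw [← recolor_mem_iff (k := k), heq, recolor_mem_iff]
  by_cases huA : f u ∈ A
  · rw [recolor_of_mem huA, recolor_of_mem (hmem.1 huA)] at heq
    exact hf huv heq
  · have hvA := mt hmem.2 huA
    rw [recolor_of_notMem huA hu, recolor_of_notMem hvA hv] at heq
    exact hk (u := ⟨u, huA, hu⟩) (v := ⟨v, hvA, hv⟩) huv (Subtype.ext heq)

variable [Fintype V] [DecidableEq C]

lemma hasNearlyUniformFibers_recolor [Fintype {v // f v ∉ A ∧ v ≠ y}]
    (hf : HasNearlyUniformFibers s f a b) (hk : ∀ c, #{v | k v = c} = s) (ha : a ∈ A)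
    (hb : b ∉ A) (hy : f y ∉ A) : HasNearlyUniformFibers s (recolor f k) a (f y) := by
  classical
  intro c
  by_cases hc : c ∈ A
  · have hcb : c ≠ b := fun hcb => hb (hcb ▸ hc)
    have hcy : c ≠ f y := fun hcy => hy (hcy ▸ hc)
    have hiff (v : V) : recolor f k v = c ↔ f v = c := by
      refine ⟨fun hv => ?_, fun hv => (recolor_of_mem (hv.symm ▸ hc)).trans hv⟩
      exact (recolor_of_mem (recolor_mem_iff.1 (hv.symm ▸ hc))).symm.trans hv
    simpa [hiff, hcb, hcy] using hf c
  · have hca : c ≠ a := fun hca => hc (hca ▸ ha)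
    have hfiber : {v ∈ univ.erase y | recolor f k v = c} =
        ({v | k v = ⟨c, hc⟩} : Finset _).map (Embedding.subtype _) := by
      ext v
      simp only [mem_filter, mem_erase, mem_univ, and_true, true_and, mem_map,
        Embedding.subtype_apply]
      constructor
      · rintro ⟨hvy, hv⟩
        have hvA : f v ∉ A := fun h => hc (hv ▸ recolor_mem_iff.2 h)
        exact ⟨⟨v, hvA, hvy⟩, Subtype.ext ((recolor_of_notMem hvA hvy).symm.trans hv), rfl⟩
      · rintro ⟨w, hw, rfl⟩
        exact ⟨w.2.2, (recolor_of_notMem w.2.1 w.2.2).trans (congrArg Subtype.val hw)⟩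
    rw [card_fiber_eq_add_card_erase _ y, hfiber, card_map, hk, recolor_self]
    simp [hca]

lemma degree_comap_subtype_le_colorDegree [DecidableRel G.Adj] [Fintype C] {p : V → Prop}
    [DecidablePred p] (hp : ∀ v, p v → f v ∉ A) (v : {v // p v}) :
    (G.comap (Subtype.val : {v // p v} → V)).degree v ≤ colorDegree G f v Aᶜ := by
  rw [← SimpleGraph.card_neighborFinset_eq_degree]
  refine card_le_card_of_injOn Subtype.val (fun w hw => ?_) Subtype.val_injective.injOn
  have hvw : G.Adj v w := by simpa using hw
  simpa [hvw] using hp w w.2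

variable [Fintype C] [DecidableRel G.Adj]

lemma exists_isUniformColoring_erase [DecidableEq V]
    (hbelow : HajnalSzemerediBelow.{u, v} s (Fintype.card V))
    (h : IsNearlyUniformColoring G s f a b) (hdeg : ∀ v, G.degree v < Fintype.card C)
    (ha : a ∈ A) (hb : b ∉ A) (hA : ∀ v, f v ∉ A → ∀ c ∈ A, Sees G f v c) (hy : f y ∉ A) :
    ∃ k : {v // f v ∉ A ∧ v ≠ y} → {c // c ∉ A},
      IsUniformColoring (G.comap (Subtype.val : {v // f v ∉ A ∧ v ≠ y} → V)) s k := by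
  have hcardC : Fintype.card {c // c ∉ A} = #Aᶜ := by
    rw [Fintype.card_subtype, compl_eq_univ_sdiff, ← filter_notMem_eq_sdiff]
  refine hbelow _ _ _ (Fintype.card_subtype_lt (x := y) (by simp)) ?_ fun v => ?_
  · have hpre : #{v | f v ∈ Aᶜ} = #Aᶜ * s + 1 := by
      simpa [ha, hb] using h.fibers.card_preimage Aᶜ
    have herase : ({v | f v ∉ A ∧ v ≠ y} : Finset V) = ({v | f v ∈ Aᶜ} : Finset V).erase y := by
      ext v
      simp [and_comm]
    rw [hcardC, Fintype.card_subtype, herase, card_erase_of_mem (by simpa using hy), hpre,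
      Nat.add_sub_cancel]
  · have hle := degree_comap_subtype_le_colorDegree (G := G)
      (fun w (hw : f w ∉ A ∧ w ≠ y) => hw.1) v
    have hlt := card_add_colorDegree_compl_lt (hdeg v) Subset.rfl (hA v v.2.1)
    have hcompl := card_add_card_compl A
    omega

lemma exists_isTransfer (hbelow : HajnalSzemerediBelow.{u, v} s (Fintype.card V))
    (h : IsNearlyUniformColoring G s f a b) (hdeg : ∀ v, G.degree v < Fintype.card C)
    (ha : a ∈ A) (hb : b ∉ A) (hA : ∀ v, f v ∉ A → ∀ c ∈ A, Sees G f v c) (hy : f y ∉ A) (W : C) :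
    ∃ g, IsTransfer G s f g A a y W := by
  classical
  obtain ⟨k, hk⟩ := exists_isUniformColoring_erase hbelow h hdeg ha hb hA hy
  have hfibers := hasNearlyUniformFibers_recolor h.fibers hk.card_fiber ha hb hy
  rw [← recolor_self (k := k)] at hfibers
  refine ⟨update (recolor f k) y W, update_self .., fun v hv => ?_, fun v hvy hv => ?_,
    fun u v hu hv huv => ?_, hfibers.update W⟩
  · rw [update_of_ne (by rintro rfl; exact hy hv), recolor_of_mem hv]
  · rwa [update_of_ne hvy, recolor_mem_iff]
  · rw [update_of_ne hu, update_of_ne hv]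
    exact recolor_ne_of_adj h.isProper hk.isProper hu hv huv

end Transfer

section Augmentation

universe u v

variable {V : Type u} {C : Type v} [Fintype V] [DecidableEq C] {G : SimpleGraph V} {s : ℕ}
  {f g : V → C} {A : Finset C} {a b c W X : C} {y y₁ y₂ z : V}

namespace IsTransfer

lemma apply_mem_iff (ht : IsTransfer G s f g A a y W) {v : V} (hv : v ≠ y) :
    g v ∈ A ↔ f v ∈ A := by
  refine ⟨fun hg => ?_, fun hf => (ht.apply_eq v hf).symm ▸ hf⟩
  by_contra hf
  exact ht.apply_notMem v hv hf hg

lemma apply_eq_iff (ht : IsTransfer G s f g A a y W) (hy : f y ∉ A) (hc : c ∈ A) (hcW : c ≠ W)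
    {v : V} : g v = c ↔ f v = c := by
  refine ⟨fun hv => ?_, fun hv => (ht.apply_eq v (hv.symm ▸ hc)).trans hv⟩
  have hvy : v ≠ y := by
    rintro rfl
    exact hcW (hv.symm.trans ht.apply_self)
  rw [← ht.apply_eq v ((ht.apply_mem_iff hvy).1 (hv.symm ▸ hc)), hv]

lemma isNearlyUniformColoring_update [DecidableEq V] (ht : IsTransfer G s f g A a y (f z))
    (hz : Solo G f z y) (hzA : f z ∈ A) (hX : ¬ Sees G g z X) :
    IsNearlyUniformColoring G s (update g z X) a X := by
  have hy : ∀ w, w ≠ z → G.Adj y w → g w ≠ f z := fun w hwz hyw hgw => by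
    have hw : f w ∈ A := (ht.apply_mem_iff hyw.ne').1 (hgw.symm ▸ hzA)
    exact hwz (hz.2 w hyw ((ht.apply_eq w hw).symm.trans hgw))
  refine ⟨isProper_update (fun v w hv hw hvw => ?_) hX,
    HasNearlyUniformFibers.update ((ht.apply_eq z hzA).symm ▸ ht.fibers) X⟩
  rcases eq_or_ne v y with rfl | hvy
  · exact fun h => hy w hw hvw (h.symm.trans ht.apply_self)
  rcases eq_or_ne w y with rfl | hwy
  · exact fun h => hy v hv hvw.symm (h.trans ht.apply_self)
  · exact ht.ne_of_adj v w hvy hwy hvw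

lemma shift_update [DecidableEq V] (ht : IsTransfer G s f g A a y (f z)) (hy : f y ∉ A)
    {u v : C} (hu : u ∈ A) (huz : u ≠ f z) (hv : v ∈ A) (hvz : v ≠ f z) (hvX : v ≠ X)
    (h : Shift G f u v) : Shift G (update g z X) u v := by
  refine h.of_fibers (fun t ht' => ?_) (fun t ht' => ?_)
  · rw [update_of_ne (by rintro rfl; exact huz ht'.symm)]
    exact (ht.apply_eq_iff hy hu huz).2 ht'
  · rw [update_of_ne (by rintro rfl; exact hvX (ht'.symm.trans (update_self ..)))] at ht'
    exact (ht.apply_eq_iff hy hv hvz).1 ht'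

lemma shift_update_of_sees [DecidableEq V] (ht : IsTransfer G s f g A a y W) (hy : f y ∉ A)
    (hW : W ∈ A) (hX : X ∉ A) (hc : c ∈ A) (hcW : c ≠ W) (hz : Sees G f z c)
    (h : Shift G f W c) : Shift G (update g z X) W c := by
  obtain ⟨v, hv, hvc⟩ := h
  have hvz : v ≠ z := by
    rintro rfl
    exact hvc hz
  refine ⟨v, ?_, fun ⟨w, hvw, hw⟩ => hvc ⟨w, hvw, ?_⟩⟩
  · rw [update_of_ne hvz, ht.apply_eq v (hv.symm ▸ hW), hv]
  · have hwz : w ≠ z := by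
      rintro rfl
      exact hX (by rwa [← update_self w X g, hw])
    exact (ht.apply_eq_iff hy hc hcW).1 (by rwa [update_of_ne hwz] at hw)

lemma not_sees_update [DecidableEq V] (ht : IsTransfer G s f g A a y₁ (f z))
    (hz : Solo G f z y₂) (hzA : f z ∈ A) (hX : X ∉ A) (hy : ¬ G.Adj y₁ y₂) :
    ¬ Sees G (update g z X) y₂ (f z) := by
  rintro ⟨w, hyw, hw⟩
  have hwz : w ≠ z := by
    rintro rfl
    exact hX (by rwa [← update_self w X g, hw])
  have hwy : w ≠ y₁ := by
    rintro rfl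
    exact hy hyw.symm
  rw [update_of_ne hwz] at hw
  have hwA : f w ∈ A := (ht.apply_mem_iff hwy).1 (hw.symm ▸ hzA)
  exact hwz (hz.2 w hyw ((ht.apply_eq w hwA).symm.trans hw))

variable [Fintype C]

lemma mem_accessible_update [DecidableEq V]
    (ht : IsTransfer G s f g (accessible (Shift G f) a) a y (f z))
    (hy : f y ∉ accessible (Shift G f) a) (hX : X ∈ accessible (Shift G f) a → c = X)
    (hcz : c ≠ f z) (hc : c ∈ accessible (avoiding (Shift G f) (f z)) a) :
    c ∈ accessible (Shift G (update g z X)) a := by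
  refine mem_accessible.2 (reflTransGen_of_between
    (reflTransGen_avoiding_self (mem_accessible.1 hc)) fun u v hcu ⟨⟨huv, hvz⟩, hvc⟩ hva => ?_)
  have hvA : v ∈ accessible (Shift G f) a :=
    mem_accessible.2 (reflTransGen_of_avoiding (reflTransGen_of_avoiding hva))
  have huz : u ≠ f z := ne_of_reflTransGen_avoiding (reflTransGen_of_avoiding hcu) hcz
  refine ht.shift_update hy (mem_accessible_of_rel huv hvA) huz hvA hvz ?_ huv
  rintro rfl
  exact hvc (hX hvA).symm

lemma exists_isUniformColoring (ht : IsTransfer G s f g (accessible (Shift G f) a) a y (f z))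
    (hz : Solo G f z y) (hy : f y ∉ accessible (Shift G f) a)
    (hzA : f z ∈ accessible (Shift G f) a) (hXz : X ≠ f z)
    (hX : X ∈ accessible (avoiding (Shift G f) (f z)) a) (hzX : ¬ Sees G f z X) :
    ∃ k : V → C, IsUniformColoring G s k := by
  classical
  have hXA : X ∈ accessible (Shift G f) a :=
    mem_accessible.2 (reflTransGen_of_avoiding (mem_accessible.1 hX))
  have hgX : ¬ Sees G g z X := fun ⟨w, hzw, hw⟩ =>
    hzX ⟨w, hzw, (ht.apply_eq_iff hy hXA hXz).1 hw⟩
  exact (ht.isNearlyUniformColoring_update hz hzA hgX).exists_isUniformColoring_of_mem_accessible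
    (ht.mem_accessible_update hy (fun _ => rfl) hXz hX)

lemma exists_notMem_not_sees [DecidableRel G.Adj] (ht : IsTransfer G s f g A a y W)
    (hdeg : G.degree z < Fintype.card C) (hy : f y ∉ A) (hyz : G.Adj y z) (hW : W ∈ A)
    (hA : ∀ c ∈ A, c ≠ W → Sees G f z c) : ∃ X ∉ A, ¬ Sees G g z X := by
  classical
  by_contra! hall
  have hsub : Aᶜ ⊆ ({w ∈ G.neighborFinset z | f w ∈ Aᶜ}.erase y).image g := fun c hc => by
    have hcA := mem_compl.1 hc
    obtain ⟨w, hzw, rfl⟩ := hall c hcA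
    have hwy : w ≠ y := by
      rintro rfl
      exact hcA (ht.apply_self.symm ▸ hW)
    refine mem_image_of_mem g (mem_erase.2 ⟨hwy, ?_⟩)
    simpa [hzw] using mt (ht.apply_mem_iff hwy).2 hcA
  have hle : #Aᶜ ≤ colorDegree G f z Aᶜ - 1 := by
    refine (card_le_card hsub).trans (card_image_le.trans_eq (card_erase_of_mem ?_))
    simpa [hyz.symm] using hy
  have hlt := card_add_colorDegree_compl_lt hdeg (erase_subset W A) fun c hc =>
    hA c (mem_of_mem_erase hc) (ne_of_mem_erase hc)
  have hpos : 0 < colorDegree G f z Aᶜ := card_pos.2 ⟨y, by simpa [hyz.symm] using hy⟩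
  have herase := card_erase_add_one hW
  have hcompl := card_add_card_compl A
  omega

-- The vertex `y₂` keeps a colour outside the old accessible set, and since `z` has left the
-- class of `f z` and `y₁` is not its neighbour, it can now be moved into that class.
lemma accessible_ssubset_accessible_update [DecidableEq V]
    (ht : IsTransfer G s f g (accessible (Shift G f) a) a y₁ (f z))
    (hy₁ : f y₁ ∉ accessible (Shift G f) a) (hy₂ : f y₂ ∉ accessible (Shift G f) a)
    (hne : y₁ ≠ y₂) (hadj : ¬ G.Adj y₁ y₂) (hz : Solo G f z y₂)
    (hzA : f z ∈ accessible (Shift G f) a) (hza : f z ≠ a)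
    (hacc : accessible (Shift G f) a ⊆ accessible (avoiding (Shift G f) (f z)) a)
    (hsees : ∀ c ∈ accessible (Shift G f) a, c ≠ f z → Sees G f z c)
    (hX : X ∉ accessible (Shift G f) a) :
    accessible (Shift G f) a ⊂ accessible (Shift G (update g z X)) a := by
  have hkeep : ∀ c ∈ accessible (Shift G f) a, c ≠ f z →
      c ∈ accessible (Shift G (update g z X)) a := fun c hc hcz =>
    ht.mem_accessible_update hy₁ (fun h => absurd h hX) hcz (hacc hc)
  have hkeep_z : f z ∈ accessible (Shift G (update g z X)) a := by
    obtain hza' | ⟨d, ⟨hzd, hdz⟩, hda⟩ :=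
      (reflTransGen_avoiding_self (mem_accessible.1 hzA)).cases_head
    · exact absurd hza' hza
    have hd := mem_accessible.2 (reflTransGen_of_avoiding hda)
    exact mem_accessible_of_rel
      (ht.shift_update_of_sees hy₁ hzA hX hd hdz (hsees d hd hdz) hzd) (hkeep d hd hdz)
  have hgy₂ : g y₂ ∉ accessible (Shift G f) a := ht.apply_notMem y₂ hne.symm hy₂
  refine (ssubset_iff_of_subset fun c hc => ?_).2 ⟨g y₂, ?_, hgy₂⟩
  · rcases eq_or_ne c (f z) with rfl | hcz
    exacts [hkeep_z, hkeep c hc hcz]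
  · exact mem_accessible_of_rel
      ⟨y₂, update_of_ne hz.1.ne .., ht.not_sees_update hz hzA hX hadj⟩ hkeep_z

end IsTransfer

variable [Fintype C] [DecidableRel G.Adj]

namespace IsNearlyUniformColoring

lemma exists_solo_pair_of_terminal {T : Finset C} {u : C} (h : IsNearlyUniformColoring G s f a b)
    (hdeg : ∀ v, G.degree v < Fintype.card C) (hb : b ∉ accessible (Shift G f) a)
    (hTA : T ⊆ accessible (Shift G f) a) (hT : T.Nonempty) (haT : a ∉ T)
    (hout : ∀ w ∈ T, ∀ c ∈ accessible (Shift G f) a, c ≠ u → c ∉ T → ¬ Shift G f w c)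
    (hsolo : ∀ z y, f z ∈ T → f y ∉ accessible (Shift G f) a → Solo G f z y →
      ∀ c ∈ accessible (Shift G f) a, c ≠ f z → Sees G f z c) :
    ∃ z y₁ y₂, f z ∈ T ∧ f y₁ ∉ accessible (Shift G f) a ∧ f y₂ ∉ accessible (Shift G f) a ∧
      Solo G f z y₁ ∧ Solo G f z y₂ ∧ y₁ ≠ y₂ ∧ ¬ G.Adj y₁ y₂ := by
  have haA := self_mem_accessible (Shift G f) a
  have hbT : b ∉ T := fun hbT => hb (hTA hbT)
  have hB : ∀ y, f y ∉ accessible (Shift G f) a → ∀ c ∈ accessible (Shift G f) a, Sees G f y c :=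
    fun y hy c hc => sees_of_notMem_accessible hy hc
  have hBcard : #{v | f v ∈ (accessible (Shift G f) a)ᶜ} =
      #(accessible (Shift G f) a)ᶜ * s + 1 := by
    simpa [haA, hb] using h.fibers.card_preimage (accessible (Shift G f) a)ᶜ
  have hTcard : #{v | f v ∈ T} = #T * s := by
    simpa [haT, hbT] using h.fibers.card_preimage T
  obtain ⟨W, hWT⟩ := hT
  have hlt := card_compl_lt_card_of_sees hdeg hTA hWT (fun y hy => hB y hy W (hTA hWT))
    (by omega) (h.fibers.card_fiber (ne_of_mem_of_not_mem hWT haT)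
      (ne_of_mem_of_not_mem hWT hbT))
    (fun z hz c hc hcu hcT => by
      by_contra hzc
      exact hout W hWT c hc hcu hcT ⟨z, hz, hzc⟩)
    (fun z y hz => hz ▸ hsolo z y (hz.symm ▸ hWT))
  exact exists_solo_pair_not_adj hdeg hTA hlt hB (by omega) hTcard

lemma exists_isUniformColoring_or_ssubset (h : IsNearlyUniformColoring G s f a b)
    (hbelow : HajnalSzemerediBelow.{u, v} s (Fintype.card V))
    (hdeg : ∀ v, G.degree v < Fintype.card C) (hb : b ∉ accessible (Shift G f) a) :
    (∃ k : V → C, IsUniformColoring G s k) ∨ ∃ f' b', IsNearlyUniformColoring G s f' a b' ∧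
      accessible (Shift G f) a ⊂ accessible (Shift G f') a := by
  classical
  have haA := self_mem_accessible (Shift G f) a
  obtain ⟨x, hxA, hxa⟩ := h.exists_mem_accessible_ne hdeg hb
  obtain ⟨u, T, hTA, hT, haT, hTacc, hout⟩ := exists_terminal_set hxA hxa
  have htransfer {y : V} (hy : f y ∉ accessible (Shift G f) a) (W : C) :=
    exists_isTransfer hbelow h hdeg haA hb (fun v hv c => sees_of_notMem_accessible hv) hy W
  by_cases hsolo : ∀ z y, f z ∈ T → f y ∉ accessible (Shift G f) a → Solo G f z y →
      ∀ c ∈ accessible (Shift G f) a, c ≠ f z → Sees G f z c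
  · right
    obtain ⟨z, y₁, y₂, hzT, hy₁, hy₂, hz₁, hz₂, hne, hadj⟩ :=
      h.exists_solo_pair_of_terminal hdeg hb hTA hT haT hout hsolo
    have hzA := hTA hzT
    have hsees := hsolo z y₁ hzT hy₁ hz₁
    obtain ⟨g, hg⟩ := htransfer hy₁ (f z)
    obtain ⟨X, hX, hzX⟩ := hg.exists_notMem_not_sees (hdeg z) hy₁ hz₁.1 hzA hsees
    exact ⟨_, X, hg.isNearlyUniformColoring_update hz₁ hzA hzX,
      hg.accessible_ssubset_accessible_update hy₁ hy₂ hne hadj hz₂ hzA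
        (ne_of_mem_of_not_mem hzT haT) (hTacc _ hzT) hsees hX⟩
  · left
    push Not at hsolo
    obtain ⟨z, y, hzT, hy, hz, X, hX, hXz, hzX⟩ := hsolo
    obtain ⟨g, hg⟩ := htransfer hy (f z)
    exact hg.exists_isUniformColoring hz hy (hTA hzT) hXz (hTacc _ hzT hX) hzX

lemma exists_isUniformColoring (h : IsNearlyUniformColoring G s f a b)
    (hbelow : HajnalSzemerediBelow.{u, v} s (Fintype.card V))
    (hdeg : ∀ v, G.degree v < Fintype.card C) : ∃ k : V → C, IsUniformColoring G s k := by
  induction hA : accessible (Shift G f) a using WellFoundedGT.induction generalizing f b with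
  | _ A ih
  subst hA
  by_cases hb : b ∈ accessible (Shift G f) a
  · exact h.exists_isUniformColoring_of_mem_accessible hb
  obtain hk | ⟨f', b', h', hlt⟩ := h.exists_isUniformColoring_or_ssubset hbelow hdeg hb
  exacts [hk, ih _ hlt h' rfl]

end IsNearlyUniformColoring

end Augmentation

section Existence

universe u v

variable {V : Type u} {C : Type v} [Fintype V] {G : SimpleGraph V} {s : ℕ} {f : V → C} {v : V}

lemma exists_not_sees [DecidableRel G.Adj] [Fintype C] (hdeg : G.degree v < Fintype.card C) :
    ∃ x, ¬ Sees G f v x := by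
  classical
  by_contra! hsees
  have hlt := card_add_colorDegree_compl_lt hdeg (Subset.refl univ) fun c _ => hsees c
  rw [card_univ] at hlt
  omega

variable [DecidableEq C]

lemma IsUniformColoring.isNearlyUniformColoring_update [DecidableEq V] {x : C}
    (h : IsUniformColoring (G.deleteIncidenceSet v) s f) (hx : ¬ Sees G f v x) :
    IsNearlyUniformColoring G s (update f v x) (f v) x := by
  refine ⟨isProper_update (fun u w hu hw huw => h.isProper ?_) hx,
    (hasNearlyUniformFibers_self_iff.2 h.card_fiber).update x⟩
  exact SimpleGraph.deleteIncidenceSet_adj.2 ⟨huw, hu, hw⟩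

variable [Fintype C]

lemma exists_isUniformColoring_bot (hcard : Fintype.card V = Fintype.card C * s) :
    ∃ f : V → C, IsUniformColoring ⊥ s f := by
  let e : V ≃ C × Fin s := Fintype.equivOfCardEq (by simpa using hcard)
  refine ⟨fun v => (e v).1, fun _ _ h => h.elim, fun c => ?_⟩
  calc #{v | (e v).1 = c} = #{p : C × Fin s | p.1 = c} := by
        rw [← card_map e.toEmbedding, map_filter, map_univ_equiv]
        simp
    _ = s := by
        have hfiber : ({p : C × Fin s | p.1 = c} : Finset (C × Fin s)) = {c} ×ˢ univ := by
          ext p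
          rw [mem_product]
          simp
        rw [hfiber, card_product, card_singleton, card_fin, one_mul]

lemma HajnalSzemerediBelow.exists_isUniformColoring [inst : DecidableRel G.Adj]
    (hbelow : HajnalSzemerediBelow.{u, v} s (Fintype.card V))
    (hcard : Fintype.card V = Fintype.card C * s) (hdeg : ∀ v, G.degree v < Fintype.card C) :
    ∃ f : V → C, IsUniformColoring G s f := by
  classical
  induction G using WellFoundedLT.induction generalizing inst with
  | _ G ihG
  rcases eq_or_ne G ⊥ with rfl | hG
  · exact exists_isUniformColoring_bot hcard
  obtain ⟨v, w, hvw⟩ := SimpleGraph.ne_bot_iff_exists_adj.1 hG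
  have hlt : G.deleteIncidenceSet v < G := by
    refine (G.deleteIncidenceSet_le v).lt_of_ne fun heq => ?_
    exact (SimpleGraph.deleteIncidenceSet_adj.1 (heq ▸ hvw)).2.1 rfl
  obtain ⟨f, hf⟩ := ihG _ hlt fun u =>
    (SimpleGraph.degree_le_of_le (G.deleteIncidenceSet_le v)).trans_lt (hdeg u)
  obtain ⟨x, hx⟩ := exists_not_sees (f := f) (hdeg v)
  exact (hf.isNearlyUniformColoring_update hx).exists_isUniformColoring hbelow hdeg

lemma hajnalSzemerediBelow (s n : ℕ) : HajnalSzemerediBelow.{u, v} s n := by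
  induction n with
  | zero => exact fun _ _ _ _ _ _ _ h => absurd h (Nat.not_lt_zero _)
  | succ n ih =>
    intro V C _ _ _ G _ hn hcard hdeg
    exact HajnalSzemerediBelow.exists_isUniformColoring
      (fun V' C' _ _ _ G' _ h => ih V' C' G' (by omega)) hcard hdeg

theorem exists_isUniformColoring [G.LocallyFinite] (hcard : Fintype.card V = Fintype.card C * s)
    (hdeg : ∀ v, G.degree v < Fintype.card C) : ∃ f : V → C, IsUniformColoring G s f := by
  classical
  exact hajnalSzemerediBelow s _ V C G (Nat.lt_succ_self _) hcard fun v => by convert hdeg v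

end Existence

section Padding

variable {V W C : Type*} {G : SimpleGraph V} {H : SimpleGraph W}

lemma exists_add_eq_succ_mul (n d : ℕ) : ∃ s p, p ≤ d ∧ n + p = (d + 1) * s := by
  refine ⟨(n + d) / (d + 1), d - (n + d) % (d + 1), Nat.sub_le _ _, ?_⟩
  have hdiv := Nat.div_add_mod (n + d) (d + 1)
  have hmod := Nat.mod_lt (n + d) (y := d + 1) (Nat.succ_pos d)
  omega

lemma degree_sum_inl (v : V) [Fintype (G.neighborSet v)]
    [Fintype ((G ⊕g H).neighborSet (.inl v))] : (G ⊕g H).degree (.inl v) = G.degree v := by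
  have hmap : (G ⊕g H).neighborFinset (.inl v) = (G.neighborFinset v).map .inl := by
    ext (u | u) <;> simp
  rw [← SimpleGraph.card_neighborFinset_eq_degree, hmap, card_map,
    SimpleGraph.card_neighborFinset_eq_degree]

lemma degree_sum_inr (w : W) [Fintype (H.neighborSet w)]
    [Fintype ((G ⊕g H).neighborSet (.inr w))] : (G ⊕g H).degree (.inr w) = H.degree w := by
  have hmap : (G ⊕g H).neighborFinset (.inr w) = (H.neighborFinset w).map .inr := by
    ext (u | u) <;> simp
  rw [← SimpleGraph.card_neighborFinset_eq_degree, hmap, card_map,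
    SimpleGraph.card_neighborFinset_eq_degree]

lemma degree_sum_lt [G.LocallyFinite] [H.LocallyFinite] {n : ℕ} (hG : ∀ v, G.degree v < n)
    (hH : ∀ w, H.degree w < n) (x : V ⊕ W) [Fintype ((G ⊕g H).neighborSet x)] :
    (G ⊕g H).degree x < n := by
  rcases x with v | w
  · exact (degree_sum_inl v).trans_lt (hG v)
  · exact (degree_sum_inr w).trans_lt (hH w)

lemma IsProper.injective {f : V → C} (hf : IsProper ⊤ f) : Injective f := fun _ _ h => by
  by_contra hne
  exact hf hne h

lemma card_fiber_sum [Fintype V] [Fintype W] [DecidableEq C] (f : V ⊕ W → C) (c : C) :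
    #{x | f x = c} = #{v | f (.inl v) = c} + #{w | f (.inr w) = c} := by
  simp only [card_filter, Fintype.sum_sum_type]

lemma IsUniformColoring.card_fiber_inl_le [Fintype V] [Fintype W] [DecidableEq C] {s : ℕ}
    {f : V ⊕ W → C} (h : IsUniformColoring (G ⊕g (⊤ : SimpleGraph W)) s f) (x y : C) :
    #{v | f (.inl v) = x} ≤ #{v | f (.inl v) = y} + 1 := by
  have hinj : Injective (f ∘ Sum.inr) :=
    IsProper.injective fun u v huv => h.isProper (by simpa using huv)
  have hy : #{w | f (.inr w) = y} ≤ 1 := card_le_one.2 fun u hu v hv =>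
    hinj ((mem_filter.1 hu).2.trans (mem_filter.1 hv).2.symm)
  have hxs := h.card_fiber x
  have hys := h.card_fiber y
  rw [card_fiber_sum] at hxs hys
  omega

end Padding

end HajnalSzemeredi

/-- **Hajnal–Szemerédi.** Every finite simple graph with maximum degree at most `Δ`
admits an equitable `(Δ+1)`-coloring: a proper coloring whose color classes differ
in size by at most 1. -/
theorem stmt6 {V : Type*} [Fintype V] [DecidableEq V] (G : SimpleGraph V)
    [DecidableRel G.Adj] (Δ : ℕ) (hΔ : ∀ v : V, G.degree v ≤ Δ) :
    ∃ f : V → Fin (Δ + 1),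
      (∀ u v : V, G.Adj u v → f u ≠ f v) ∧
      ∀ x y : Fin (Δ + 1),
        (Finset.univ.filter fun v => f v = x).card ≤
          (Finset.univ.filter fun v => f v = y).card + 1 := by
  obtain ⟨s, p, hp, hs⟩ := HajnalSzemeredi.exists_add_eq_succ_mul (Fintype.card V) Δ
  have hcard : Fintype.card (V ⊕ Fin p) = Fintype.card (Fin (Δ + 1)) * s := by simpa using hs
  have hdegG (v : V) : G.degree v < Fintype.card (Fin (Δ + 1)) := by
    simpa [Nat.lt_succ_iff] using hΔ v
  have hdegK (i : Fin p) : (⊤ : SimpleGraph (Fin p)).degree i < Fintype.card (Fin (Δ + 1)) := by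
    rw [SimpleGraph.complete_graph_degree, Fintype.card_fin, Fintype.card_fin]
    omega
  obtain ⟨f, hf⟩ := HajnalSzemeredi.exists_isUniformColoring hcard
    (HajnalSzemeredi.degree_sum_lt hdegG hdegK ·)
  exact ⟨f ∘ Sum.inl, fun u v huv => hf.isProper (by simpa using huv), hf.card_fiber_inl_le⟩
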